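/- Let n be a positive integer divisible by 16 and set m := n/4. Let A₁, …, A_m be subsets of {1,…,n} with |A_i| ≥ n − n/16 for every i, and let X₁, …, X_m be independent random variables with X_i uniformly distributed on A_i. Then the probability that X₁, …, X_m are pairwise distinct is at most (15/16)^{n/8}. -/

import Mathlib

/-!
Reveal the values `x 0, x 1, …` one at a time. Once `i` distinct values have been used, at most
`n - i` elements of `A i` remain available, so the number of injective choices is at most
`∏ i, min |A i| (n - i)`. For `i ≥ n / 8` we have `n - i ≤ 7n/8 ≤ (15/16) (15n/16) ≤ (15/16) |A i|`,
so each of the last `n/4 - n/8 = n/8` indices saves a factor `15/16`.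
-/

open Finset

section DistinctRepresentatives

variable {ι α : Type*}

open Classical in
/-- The systems of distinct representatives of the family `A`: the outcomes `x` with pairwise
distinct values, among the choices `x i ∈ A i` that make up the sample space. -/
noncomputable def distinctRepresentatives [Fintype ι] (A : ι → Finset α) : Finset (ι → α) :=
  {x ∈ Fintype.piFinset A | Function.Injective x}

lemma mem_distinctRepresentatives [Fintype ι] {A : ι → Finset α} {x : ι → α} :
    x ∈ distinctRepresentatives A ↔ (∀ i, x i ∈ A i) ∧ Function.Injective x := by
  simp only [distinctRepresentatives, mem_filter, Fintype.mem_piFinset]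

lemma snoc_mem_distinctRepresentatives [DecidableEq α] {m : ℕ} {A : Fin (m + 1) → Finset α}
    {x : Fin m → α} {a : α} :
    (Fin.snoc x a : Fin (m + 1) → α) ∈ distinctRepresentatives A ↔
      x ∈ distinctRepresentatives (fun i : Fin m => A i.castSucc) ∧
        a ∈ A (Fin.last m) \ univ.image x := by
  simp only [mem_distinctRepresentatives, Fin.forall_fin_succ', Fin.snoc_castSucc, Fin.snoc_last,
    Fin.snoc_injective_iff, mem_sdiff, mem_image, mem_univ, true_and, Set.mem_range]
  tauto

lemma card_distinctRepresentatives_succ [DecidableEq α] {m : ℕ} (A : Fin (m + 1) → Finset α) :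
    #(distinctRepresentatives A) =
      ∑ x ∈ distinctRepresentatives (fun i : Fin m => A i.castSucc),
        #(A (Fin.last m) \ univ.image x) := by
  rw [← card_sigma]
  refine (card_bij (fun p _ => (Fin.snoc p.1 p.2 : Fin (m + 1) → α)) ?_ ?_ ?_).symm
  · exact fun p hp => snoc_mem_distinctRepresentatives.mpr (mem_sigma.mp hp)
  · rintro ⟨x, a⟩ - ⟨y, b⟩ - h
    obtain ⟨rfl, rfl⟩ := Fin.snoc_injective2 h
    rfl
  · intro z hz
    rw [← Fin.snoc_init_self z] at hz
    exact ⟨⟨Fin.init z, z (Fin.last m)⟩, mem_sigma.mpr (snoc_mem_distinctRepresentatives.mp hz),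
      Fin.snoc_init_self z⟩

lemma card_sdiff_le_min [Fintype α] [DecidableEq α] (s t : Finset α) :
    #(s \ t) ≤ min #s (Fintype.card α - #t) := by
  refine le_min (card_le_card sdiff_subset) ?_
  rw [← card_compl]
  exact card_le_card fun _ ha => mem_compl.mpr (mem_sdiff.mp ha).2

theorem card_distinctRepresentatives_le_prod_min [Fintype α] {m : ℕ} (A : Fin m → Finset α) :
    #(distinctRepresentatives A) ≤ ∏ i : Fin m, min #(A i) (Fintype.card α - i) := by
  classical
  induction m with
  | zero => exact card_le_one_of_subsingleton _
  | succ m ih =>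
    have remaining : ∀ x ∈ distinctRepresentatives (fun i : Fin m => A i.castSucc),
        #(A (Fin.last m) \ univ.image x) ≤ min #(A (Fin.last m)) (Fintype.card α - m) := by
      intro x hx
      have card_used : #(univ.image x) = m := by
        rw [card_image_of_injective _ (mem_distinctRepresentatives.mp hx).2, card_univ,
          Fintype.card_fin]
      simpa only [card_used] using card_sdiff_le_min (A (Fin.last m)) (univ.image x)
    rw [card_distinctRepresentatives_succ, Fin.prod_univ_castSucc]
    exact (sum_le_card_nsmul _ _ _ remaining).trans (Nat.mul_le_mul_right _ (ih _))

end DistinctRepresentatives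

lemma card_filter_le_val (m k : ℕ) : #{i : Fin m | k ≤ (i : ℕ)} = m - k := by
  have h := card_filter_add_card_filter_not (s := univ) fun i : Fin m => (i : ℕ) < k
  simp only [Fin.card_filter_val_lt, not_lt, card_univ, Fintype.card_fin] at h
  omega

lemma prod_le_pow_card_mul_prod {ι R : Type*} [CommSemiring R] [PartialOrder R]
    [IsOrderedRing R] {s : Finset ι} {p : ι → Prop} [DecidablePred p] {f g : ι → R} {r : R}
    (hf : ∀ i ∈ s, 0 ≤ f i) (hfg : ∀ i ∈ s, ¬p i → f i ≤ g i)
    (hfr : ∀ i ∈ s, p i → f i ≤ r * g i) :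
    ∏ i ∈ s, f i ≤ r ^ #{i ∈ s | p i} * ∏ i ∈ s, g i :=
  calc ∏ i ∈ s, f i ≤ ∏ i ∈ s, (if p i then r else 1) * g i := by
        refine prod_le_prod hf fun i hi => ?_
        split_ifs with hp
        · exact hfr i hi hp
        · simpa only [one_mul] using hfg i hi hp
    _ = r ^ #{i ∈ s | p i} * ∏ i ∈ s, g i := by
        rw [prod_mul_distrib, ← prod_filter, prod_const]

theorem collision_probability_bound_general {α : Type*} [Fintype α] {m k : ℕ} {r : ℝ}
    (A : Fin m → Finset α)
    (hA : ∀ i : Fin m, k ≤ i → ((Fintype.card α - k : ℕ) : ℝ) ≤ r * #(A i)) :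
    (Nat.card {x : Fin m → α // (∀ i, x i ∈ A i) ∧ Function.Injective x} : ℝ)
      ≤ r ^ (m - k) * ∏ i, (#(A i) : ℝ) := by
  have saving (i : Fin m) (hi : k ≤ i) :
      ((min #(A i) (Fintype.card α - i) : ℕ) : ℝ) ≤ r * #(A i) :=
    (Nat.cast_le.mpr <| (min_le_right _ _).trans (Nat.sub_le_sub_left hi _)).trans (hA i hi)
  calc (Nat.card {x : Fin m → α // (∀ i, x i ∈ A i) ∧ Function.Injective x} : ℝ)
      = #(distinctRepresentatives A) := by
        rw [Nat.subtype_card _ fun _ => mem_distinctRepresentatives]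
    _ ≤ ∏ i : Fin m, ((min #(A i) (Fintype.card α - i) : ℕ) : ℝ) :=
        mod_cast card_distinctRepresentatives_le_prod_min A
    _ ≤ r ^ #{i : Fin m | k ≤ (i : ℕ)} * ∏ i, (#(A i) : ℝ) :=
        prod_le_pow_card_mul_prod (fun _ _ => Nat.cast_nonneg _)
          (fun _ _ _ => Nat.cast_le.mpr (min_le_left _ _)) fun i _ => saving i
    _ = r ^ (m - k) * ∏ i, (#(A i) : ℝ) := by rw [card_filter_le_val]

lemma natCast_sub_div_eight_le {n a : ℕ} (h16 : 16 ∣ n) (ha : n - n / 16 ≤ a) :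
    ((n - n / 8 : ℕ) : ℝ) ≤ 15 / 16 * a := by
  have h : 16 * (n - n / 8) ≤ 15 * a := by omega
  have h' : (16 : ℝ) * (n - n / 8 : ℕ) ≤ 15 * a := mod_cast h
  linarith

/-- Let `16 ∣ n`, `n > 0`, `m = n/4`, and let `A 0, …, A (m-1)` be
subsets of `{1,…,n}` with `|A i| ≥ n − n/16`. If the `X i` are independent with
`X i` uniform on `A i` (so that probabilities are counted over the product of the
`A i`), then the probability that the `X i` are pairwise distinct is at most
`(15/16)^(n/8)`. -/
theorem collision_probability_bound (n : ℕ) (hn : 0 < n) (h16 : 16 ∣ n)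
    (A : Fin (n / 4) → Finset (Fin n))
    (hA : ∀ i, n - n / 16 ≤ (A i).card) :
    (Nat.card {x : Fin (n / 4) → Fin n //
        (∀ i, x i ∈ A i) ∧ Function.Injective x} : ℝ)
      ≤ (15 / 16 : ℝ) ^ (n / 8) * ∏ i, ((A i).card : ℝ) := by
  have exponent : n / 4 - n / 8 = n / 8 := by omega
  simpa only [exponent] using collision_probability_bound_general (k := n / 8) A fun i _ => by
    simpa only [Fintype.card_fin] using natCast_sub_div_eight_le h16 (hA i)
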